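/- arXiv:2411.09511 — 2 statements merged into one kernel-verified Lean document; each statement's English description precedes it below -/
import Mathlib

section
/- For all m, n ∈ ℕ with m ≥ 1 and n ≥ 1, the integral over ℝ of the product of derivatives of Hermite functions satisfies ∫_ℝ 𝓗′_m(x)·𝓗′_n(x) dx = π(2m+1)·δ_{m,n} − π·√(m(m−1))·δ_{m,n+2} − π·√((m+1)(m+2))·δ_{m,n−2}, where δ_{i,j} equals 1 if i = j and 0 otherwise. -/
open MeasureTheory Real

/-- The Hermite polynomial `H_m(x) = (−1)^m 2^{1/4−m} (m!)^{−1/2} π^{−m/2}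
    exp(2πx²) (d^m/dx^m) exp(−2πx²)`. -/
noncomputable def hermitePoly (m : ℕ) (x : ℝ) : ℝ :=
  (-1 : ℝ) ^ m * (2 : ℝ) ^ ((1 : ℝ) / 4 - (m : ℝ)) * (Nat.factorial m : ℝ) ^ (-(1 : ℝ) / 2)
    * Real.pi ^ (-(m : ℝ) / 2) * Real.exp (2 * Real.pi * x ^ 2)
    * iteratedDeriv m (fun y => Real.exp (-(2 * Real.pi * y ^ 2))) x

/-- The Hermite function `𝓗_m(x) = H_m(x) · exp(−πx²)`. -/
noncomputable def hermiteFun (m : ℕ) (x : ℝ) : ℝ :=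
  hermitePoly m x * Real.exp (-(Real.pi * x ^ 2))

/-!
Up to normalization, `𝓗_m(x)` is the probabilists' Hermite polynomial `He_m(2√π x)` times
`exp(-πx²)`. Hence the rules `He_m' = m He_{m-1}` and `He_{m+1} = X He_m - He_m'` give the ladder
relation `𝓗_m' = √π (√m 𝓗_{m-1} - √(m+1) 𝓗_{m+1})`, and Gaussian integration by parts, which
trades a factor `He_{m+1}` for `He_m` against a derivative of the other factor, gives
orthonormality. Expanding `∫ 𝓗_m' 𝓗_n'` with the ladder relation leaves four inner products.
-/

section Gaussian

open Polynomial

variable {R : Type*} [CommSemiring R] [Algebra R ℝ] {b : ℝ}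

lemma integrable_aeval_mul_exp_neg_mul_sq (hb : 0 < b) (p : R[X]) :
    Integrable fun x : ℝ => aeval x p * exp (-b * x ^ 2) := by
  induction p using Polynomial.induction_on' with
  | add p q hp hq => simpa only [map_add, add_mul] using hp.fun_add hq
  | monomial n a =>
    have hs : (-1 : ℝ) < n := neg_one_lt_zero.trans_le n.cast_nonneg
    simpa only [aeval_monomial, rpow_natCast, mul_assoc] using
      (integrable_rpow_mul_exp_neg_mul_sq hb hs).const_mul (algebraMap R ℝ a)

lemma hasDerivAt_exp_neg_mul_sq (b x : ℝ) :
    HasDerivAt (fun y : ℝ => exp (-b * y ^ 2)) (-(2 * b * x) * exp (-b * x ^ 2)) x := by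
  refine ((hasDerivAt_pow 2 x).const_mul (-b)).exp.congr_deriv ?_
  push_cast
  ring

lemma integral_aeval_derivative_mul_exp_neg_mul_sq (hb : 0 < b) (p : R[X]) :
    ∫ x : ℝ, aeval x (derivative p) * exp (-b * x ^ 2)
      = 2 * b * ∫ x : ℝ, aeval x (X * p) * exp (-b * x ^ 2) := by
  have integrable (q : R[X]) := integrable_aeval_mul_exp_neg_mul_sq hb q
  have hderiv (x : ℝ) : HasDerivAt (fun y : ℝ => aeval y p * exp (-b * y ^ 2))
      (aeval x (derivative p) * exp (-b * x ^ 2)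
        - 2 * b * (aeval x (X * p) * exp (-b * x ^ 2))) x := by
    refine ((p.hasDerivAt_aeval x).mul (hasDerivAt_exp_neg_mul_sq b x)).congr_deriv ?_
    rw [map_mul, aeval_X]
    ring
  have hzero := integral_eq_zero_of_hasDerivAt_of_integrable hderiv
    ((integrable _).sub ((integrable _).const_mul _)) (integrable p)
  rwa [integral_sub (integrable _) ((integrable _).const_mul _), integral_const_mul,
    sub_eq_zero] at hzero

end Gaussian

section HermitePolynomial

open Polynomial

lemma derivative_hermite (n : ℕ) : derivative (hermite n) = n * hermite (n - 1) := by
  induction n with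
  | zero => simp
  | succ n ih =>
    cases n with
    | zero => simp
    | succ n =>
      have hrec : hermite (n + 1) = X * hermite n - derivative (hermite n) := hermite_succ n
      rw [hermite_succ (n + 1), derivative_sub, derivative_mul, derivative_X, ih]
      simp only [Nat.add_sub_cancel, derivative_mul, derivative_natCast, hrec]
      push_cast
      ring

lemma integral_aeval_hermite_succ_mul (n : ℕ) (p : ℤ[X]) :
    ∫ x : ℝ, aeval x (hermite (n + 1) * p) * exp (-(1 / 2) * x ^ 2)
      = ∫ x : ℝ, aeval x (hermite n * derivative p) * exp (-(1 / 2) * x ^ 2) := by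
  have integrable (q : ℤ[X]) := integrable_aeval_mul_exp_neg_mul_sq (b := 1 / 2) (by norm_num) q
  have hparts := integral_aeval_derivative_mul_exp_neg_mul_sq (b := 1 / 2) (by norm_num)
    (hermite n * p)
  have hsplit : hermite (n + 1) * p
      = X * (hermite n * p) - derivative (hermite n * p) + hermite n * derivative p := by
    rw [hermite_succ, derivative_mul]
    ring
  simp only [hsplit, map_add, map_sub, add_mul, sub_mul]
  rw [integral_add ((integrable _).sub' (integrable _)) (integrable _),
    integral_sub (integrable _) (integrable _), hparts]
  ring

lemma integral_aeval_hermite_mul_hermite (m n : ℕ) :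
    ∫ x : ℝ, aeval x (hermite m * hermite n) * exp (-(1 / 2) * x ^ 2)
      = if m = n then √(2 * π) * (m.factorial : ℝ) else 0 := by
  induction m generalizing n with
  | zero =>
    cases n with
    | zero => simpa [mul_comm] using integral_gaussian (1 / 2)
    | succ n => rw [mul_comm, integral_aeval_hermite_succ_mul]; simp
  | succ m ih =>
    cases n with
    | zero => rw [integral_aeval_hermite_succ_mul]; simp
    | succ n =>
      rw [integral_aeval_hermite_succ_mul, derivative_hermite, mul_left_comm]
      simp only [Nat.add_sub_cancel, map_mul _ (((n + 1 : ℕ) : ℤ[X])), map_natCast, mul_assoc]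
      rw [integral_const_mul, ih]
      rcases eq_or_ne m n with rfl | hmn
      · simp only [if_true, Nat.factorial_succ, Nat.cast_mul]
        ring
      · simp [hmn]

lemma iteratedDeriv_exp_neg_mul_sq_div_two (m : ℕ) (a x : ℝ) :
    iteratedDeriv m (fun y => exp (-((a * y) ^ 2 / 2))) x
      = (-1) ^ m * a ^ m * aeval (a * x) (hermite m) * exp (-((a * x) ^ 2 / 2)) := by
  have hsmooth : ContDiff ℝ m fun y : ℝ => exp (-(y ^ 2 / 2)) := by fun_prop
  rw [iteratedDeriv_comp_const_mul hsmooth, iteratedDeriv_eq_iterate]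
  dsimp only
  rw [deriv_gaussian_eq_hermite_mul_gaussian]
  ring

lemma hasDerivAt_aeval_hermite_mul_exp_neg_quarter_mul_sq (m : ℕ) (x : ℝ) :
    HasDerivAt (fun y : ℝ => aeval y (hermite m) * exp (-(1 / 4) * y ^ 2))
      (1 / 2 * (m * (aeval x (hermite (m - 1)) * exp (-(1 / 4) * x ^ 2))
        - aeval x (hermite (m + 1)) * exp (-(1 / 4) * x ^ 2))) x := by
  refine (((hermite m).hasDerivAt_aeval x).mul
    (hasDerivAt_exp_neg_mul_sq (1 / 4) x)).congr_deriv ?_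
  simp only [hermite_succ, derivative_hermite, map_sub, map_mul, aeval_X, map_natCast]
  ring

end HermitePolynomial

section HermiteFunction

open Polynomial

lemma hermitePoly_normalization (m : ℕ) :
    (2 : ℝ) ^ ((1 : ℝ) / 4 - m) * (m.factorial : ℝ) ^ (-(1 : ℝ) / 2) * π ^ (-(m : ℝ) / 2)
      * (2 * √π) ^ m = 2 ^ (1 / 4 : ℝ) / √(m.factorial) := by
  have htwo : (2 : ℝ) ^ ((1 : ℝ) / 4 - m) * 2 ^ m = 2 ^ (1 / 4 : ℝ) := by
    rw [← rpow_natCast, ← rpow_add two_pos, sub_add_cancel]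
  have hpi : π ^ (-(m : ℝ) / 2) * √π ^ m = 1 := by
    rw [sqrt_eq_rpow, ← rpow_natCast, ← rpow_mul pi_pos.le, ← rpow_add pi_pos]
    ring_nf
    exact rpow_zero π
  have hfactorial : (m.factorial : ℝ) ^ (-(1 : ℝ) / 2) = (√(m.factorial))⁻¹ := by
    rw [neg_div, rpow_neg m.factorial.cast_nonneg, sqrt_eq_rpow]
  rw [hfactorial, mul_pow, ← htwo]
  linear_combination (2 : ℝ) ^ ((1 : ℝ) / 4 - m) * 2 ^ m / √(m.factorial) * hpi

lemma hermiteFun_eq_aeval_hermite (m : ℕ) (x : ℝ) :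
    hermiteFun m x = 2 ^ (1 / 4 : ℝ) / √(m.factorial)
      * (aeval (2 * √π * x) (hermite m) * exp (-(1 / 4) * (2 * √π * x) ^ 2)) := by
  have hscale (y : ℝ) : (2 * √π * y) ^ 2 = 4 * (π * y ^ 2) := by
    rw [mul_pow, mul_pow, sq_sqrt pi_pos.le]
    ring
  have hgaussian : (fun y => exp (-(2 * π * y ^ 2))) = fun y => exp (-((2 * √π * y) ^ 2 / 2)) := by
    funext y
    rw [hscale]
    ring_nf
  have hsign : (-1 : ℝ) ^ m * (-1) ^ m = 1 := by rw [← mul_pow]; simp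
  have hexp : exp (2 * π * x ^ 2) * exp (-((2 * √π * x) ^ 2 / 2)) = 1 := by
    rw [← exp_add, hscale, exp_eq_one_iff]
    ring
  have hweight : exp (-(1 / 4) * (2 * √π * x) ^ 2) = exp (-(π * x ^ 2)) := by
    rw [hscale]
    ring_nf
  rw [hermiteFun, hermitePoly, hgaussian, iteratedDeriv_exp_neg_mul_sq_div_two, hweight,
    ← hermitePoly_normalization]
  linear_combination (2 : ℝ) ^ ((1 : ℝ) / 4 - m) * (m.factorial : ℝ) ^ (-(1 : ℝ) / 2)
    * π ^ (-(m : ℝ) / 2) * (2 * √π) ^ m * aeval (2 * √π * x) (hermite m) * exp (-(π * x ^ 2))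
    * ((-1 : ℝ) ^ m * (-1) ^ m * hexp + hsign)

lemma hermiteFun_mul_hermiteFun (m n : ℕ) (x : ℝ) :
    hermiteFun m x * hermiteFun n x = √2 / (√(m.factorial) * √(n.factorial))
      * (aeval (2 * √π * x) (hermite m * hermite n) * exp (-(1 / 2) * (2 * √π * x) ^ 2)) := by
  have hexp (u : ℝ) : exp (-(1 / 2) * u ^ 2) = exp (-(1 / 4) * u ^ 2) * exp (-(1 / 4) * u ^ 2) := by
    rw [← exp_add]
    ring_nf
  have hroot : √2 = (2 : ℝ) ^ (1 / 4 : ℝ) * 2 ^ (1 / 4 : ℝ) := by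
    rw [← rpow_add two_pos, sqrt_eq_rpow]
    norm_num
  rw [hermiteFun_eq_aeval_hermite, hermiteFun_eq_aeval_hermite, hexp, hroot, map_mul]
  ring

lemma integrable_hermiteFun_mul_hermiteFun (m n : ℕ) :
    Integrable fun x => hermiteFun m x * hermiteFun n x := by
  have hscale : 2 * √π ≠ 0 := by positivity
  simp only [hermiteFun_mul_hermiteFun]
  exact ((integrable_aeval_mul_exp_neg_mul_sq (by norm_num) (hermite m * hermite n)).comp_mul_left'
    hscale).const_mul _

lemma integral_hermiteFun_mul_hermiteFun (m n : ℕ) :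
    ∫ x, hermiteFun m x * hermiteFun n x = if m = n then 1 else 0 := by
  simp only [hermiteFun_mul_hermiteFun]
  rw [integral_const_mul, Measure.integral_comp_mul_left
    (fun y => aeval y (hermite m * hermite n) * exp (-(1 / 2) * y ^ 2)),
    integral_aeval_hermite_mul_hermite]
  rcases eq_or_ne m n with rfl | hmn
  · rw [if_pos rfl, if_pos rfl, mul_self_sqrt m.factorial.cast_nonneg, smul_eq_mul,
      abs_of_pos (by positivity), sqrt_mul zero_le_two]
    field_simp
    norm_num
  · simp [hmn]

lemma sqrt_factorial_succ (m : ℕ) : √((m + 1).factorial) = √(m + 1) * √(m.factorial) := by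
  rw [Nat.factorial_succ, Nat.cast_mul, Nat.cast_succ, sqrt_mul (by positivity)]

lemma sqrt_succ_mul_hermiteFun_succ (m : ℕ) (x : ℝ) :
    √(m + 1) * hermiteFun (m + 1) x = 2 ^ (1 / 4 : ℝ) / √(m.factorial)
      * (aeval (2 * √π * x) (hermite (m + 1)) * exp (-(1 / 4) * (2 * √π * x) ^ 2)) := by
  rw [hermiteFun_eq_aeval_hermite, sqrt_factorial_succ]
  field_simp

lemma sqrt_mul_hermiteFun_pred (m : ℕ) (x : ℝ) :
    √m * hermiteFun (m - 1) x = 2 ^ (1 / 4 : ℝ) / √(m.factorial)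
      * (m * (aeval (2 * √π * x) (hermite (m - 1)) * exp (-(1 / 4) * (2 * √π * x) ^ 2))) := by
  cases m with
  | zero => simp
  | succ m =>
    have hsq : √((m : ℝ) + 1) * √(m + 1) = m + 1 := mul_self_sqrt (by positivity)
    rw [hermiteFun_eq_aeval_hermite, sqrt_factorial_succ, Nat.add_sub_cancel, Nat.cast_succ]
    field_simp
    linear_combination aeval (2 * √π * x) (hermite m) * hsq

-- At `m = 0` the truncated index `m - 1` is harmless: its coefficient is `√0`.
lemma deriv_hermiteFun (m : ℕ) (x : ℝ) :
    deriv (hermiteFun m) x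
      = √π * (√m * hermiteFun (m - 1) x - √(m + 1) * hermiteFun (m + 1) x) := by
  have hinner : HasDerivAt (fun y => 2 * √π * y) (2 * √π) x := hasDerivAt_const_mul _
  have hderiv := ((hasDerivAt_aeval_hermite_mul_exp_neg_quarter_mul_sq m (2 * √π * x)).comp x
    hinner).const_mul (2 ^ (1 / 4 : ℝ) / √(m.factorial))
  rw [funext (hermiteFun_eq_aeval_hermite m), sqrt_mul_hermiteFun_pred,
    sqrt_succ_mul_hermiteFun_succ]
  refine hderiv.deriv.trans ?_
  ring

lemma integral_deriv_hermiteFun_mul_deriv_hermiteFun (m n : ℕ) :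
    ∫ x, deriv (hermiteFun m) x * deriv (hermiteFun n) x
      = π * (√m * √n * (if m - 1 = n - 1 then 1 else 0)
        - √m * √(n + 1) * (if m - 1 = n + 1 then 1 else 0)
        - √(m + 1) * √n * (if m + 1 = n - 1 then 1 else 0)
        + √(m + 1) * √(n + 1) * (if m = n then 1 else 0)) := by
  have hexpand (x : ℝ) : deriv (hermiteFun m) x * deriv (hermiteFun n) x
      = π * (√m * √n * (hermiteFun (m - 1) x * hermiteFun (n - 1) x)
        - √m * √(n + 1) * (hermiteFun (m - 1) x * hermiteFun (n + 1) x)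
        - √(m + 1) * √n * (hermiteFun (m + 1) x * hermiteFun (n - 1) x)
        + √(m + 1) * √(n + 1) * (hermiteFun (m + 1) x * hermiteFun (n + 1) x)) := by
    rw [deriv_hermiteFun, deriv_hermiteFun, mul_mul_mul_comm, mul_self_sqrt pi_pos.le]
    ring
  have integrable (c : ℝ) (i j : ℕ) :
      Integrable fun x => c * (hermiteFun i x * hermiteFun j x) :=
    (integrable_hermiteFun_mul_hermiteFun i j).const_mul c
  simp only [hexpand]
  rw [integral_const_mul,
    integral_add (((integrable _ _ _).sub' (integrable _ _ _)).sub' (integrable _ _ _))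
      (integrable _ _ _),
    integral_sub ((integrable _ _ _).sub' (integrable _ _ _)) (integrable _ _ _),
    integral_sub (integrable _ _ _) (integrable _ _ _)]
  simp only [integral_const_mul, integral_hermiteFun_mul_hermiteFun, Nat.add_right_cancel_iff]

end HermiteFunction

/-- For `m, n ≥ 1`:
`∫ 𝓗′_m 𝓗′_n = π(2m+1)δ_{m,n} − π√(m(m−1))δ_{m,n+2} − π√((m+1)(m+2))δ_{m,n−2}`. -/
theorem integral_deriv_hermiteFun_mul' (m n : ℕ) (hm : 1 ≤ m) (hn : 1 ≤ n) :
    ∫ x : ℝ, deriv (hermiteFun m) x * deriv (hermiteFun n) x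
      = Real.pi * (2 * (m : ℝ) + 1) * (if m = n then (1 : ℝ) else 0)
        - Real.pi * Real.sqrt ((m : ℝ) * ((m : ℝ) - 1)) * (if m = n + 2 then (1 : ℝ) else 0)
        - Real.pi * Real.sqrt (((m : ℝ) + 1) * ((m : ℝ) + 2))
            * (if n = m + 2 then (1 : ℝ) else 0) := by
  have hlower : m - 1 = n - 1 ↔ m = n := by omega
  have habove : m - 1 = n + 1 ↔ m = n + 2 := by omega
  have hbelow : m + 1 = n - 1 ↔ n = m + 2 := by omega
  rw [integral_deriv_hermiteFun_mul_deriv_hermiteFun]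
  simp only [hlower, habove, hbelow]
  have hdiag_coeff : m = n → √m * √n + √(m + 1) * √(n + 1) = 2 * m + 1 := by
    rintro rfl
    rw [mul_self_sqrt (by positivity), mul_self_sqrt (by positivity)]
    ring
  have habove_coeff : m = n + 2 → √m * √(n + 1) = √(m * (m - 1)) := by
    rintro rfl
    rw [sqrt_mul (by positivity)]
    push_cast
    ring_nf
  have hbelow_coeff : n = m + 2 → √(m + 1) * √n = √((m + 1) * (m + 2)) := by
    rintro rfl
    rw [sqrt_mul (by positivity)]
    push_cast
    rfl
  split_ifs <;> grind
end

section
/- For every m ∈ ℕ with m ≥ 1, the integral over ℝ satisfies ∫_ℝ 𝓗′_m(x)·𝓗′_0(x) dx = −π·√2 · δ_{m,2}, where δ_{m,2} equals 1 if m = 2 and 0 otherwise. -/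
open MeasureTheory Real

/-!
Up to a constant, `𝓗_m(x) exp(-πx²)` is the `m`-th derivative of `G(x) = exp(-2πx²)`. Since `𝓗′_0`
is a polynomial times `exp(-πx²)`, one integration by parts turns `∫ 𝓗′_m 𝓗′_0` into the integral
of a quadratic polynomial against `G^(m)`, and `m` further ones move all derivatives onto the
quadratic. They annihilate it for `m ≥ 3`, leave a constant times `∫ G` for `m = 2`, and leave an
odd integrand for `m = 1`.
-/

open Polynomial

lemma derivative_C_sub_C_mul_X_sq {R : Type*} [CommRing R] (a c : R) :
    derivative (C a - C c * X ^ 2) = C (-(2 * c)) * X := by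
  simp only [derivative_sub, derivative_C, derivative_C_mul_X_sq, C_neg, mul_comm c, zero_sub,
    neg_mul]

/-- The Gaussian `x ↦ exp (-bx²)`. The value `b = 2π` is the weight for which the Hermite
polynomials are orthogonal, and `b = π` gives the Gaussian factor of the Hermite functions. -/
noncomputable def gaussian (b x : ℝ) : ℝ :=
  Real.exp (-(b * x ^ 2))

lemma gaussian_ne_zero (b x : ℝ) : gaussian b x ≠ 0 :=
  Real.exp_ne_zero _

lemma gaussian_add (b c x : ℝ) : gaussian (b + c) x = gaussian b x * gaussian c x := by
  simp only [gaussian, ← Real.exp_add]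
  ring_nf

lemma gaussian_neg (b x : ℝ) : gaussian (-b) x = (gaussian b x)⁻¹ := by
  simp only [gaussian, ← Real.exp_neg, neg_mul]

lemma hasDerivAt_gaussian (b x : ℝ) :
    HasDerivAt (gaussian b) (-(2 * b * x) * gaussian b x) x := by
  have hasDerivAt_exponent : HasDerivAt (fun y : ℝ => -(b * y ^ 2)) (-(b * (2 * x))) x := by
    simpa using ((hasDerivAt_pow 2 x).const_mul b).fun_neg
  refine hasDerivAt_exponent.exp.congr_deriv ?_
  rw [gaussian]
  ring

lemma integral_gaussian_two_pi : ∫ x, gaussian (2 * π) x = √2 / 2 := by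
  calc ∫ x, gaussian (2 * π) x = √(π / (2 * π)) := by
        simpa only [gaussian, neg_mul] using integral_gaussian (2 * π)
    _ = √2 / 2 := by
        rw [div_mul_cancel_right₀ Real.pi_ne_zero, Real.sqrt_inv, Real.sqrt_div_self', one_div]

lemma integral_mul_gaussian_eq_zero (b : ℝ) : ∫ x, x * gaussian b x = 0 := by
  have integral_eq_neg : ∫ x, x * gaussian b x = -∫ x, x * gaussian b x := by
    simpa [gaussian, integral_neg] using
      (integral_neg_eq_self (fun x => x * gaussian b x) volume).symm
  linarith

lemma exists_iteratedDeriv_gaussian_eq_eval_mul (b : ℝ) (m : ℕ) :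
    ∃ p : ℝ[X], ∀ x, iteratedDeriv m (gaussian b) x = p.eval x * gaussian b x := by
  induction m with
  | zero => exact ⟨1, by simp⟩
  | succ m ih =>
    obtain ⟨p, hp⟩ := ih
    refine ⟨derivative p - C (2 * b) * X * p, fun x => ?_⟩
    rw [iteratedDeriv_succ, funext hp, ((p.hasDerivAt x).fun_mul (hasDerivAt_gaussian b x)).deriv]
    simp only [eval_sub, eval_mul, eval_C, eval_X]
    ring

lemma hasDerivAt_iteratedDeriv_gaussian (b : ℝ) (m : ℕ) (x : ℝ) :
    HasDerivAt (iteratedDeriv m (gaussian b)) (iteratedDeriv (m + 1) (gaussian b) x) x := by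
  obtain ⟨p, hp⟩ := exists_iteratedDeriv_gaussian_eq_eval_mul b m
  rw [iteratedDeriv_succ, hasDerivAt_deriv_iff, funext hp]
  exact p.differentiableAt.fun_mul (hasDerivAt_gaussian b x).differentiableAt

lemma integrable_eval_mul_gaussian {b : ℝ} (hb : 0 < b) (q : ℝ[X]) :
    Integrable fun x => q.eval x * gaussian b x := by
  induction q using Polynomial.induction_on' with
  | add p q hp hq =>
    simp only [eval_add, add_mul]
    exact hp.add hq
  | monomial n a =>
    have integrable_pow : Integrable fun x : ℝ => x ^ n * gaussian b x := by
      simpa only [gaussian, neg_mul, Real.rpow_natCast] using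
        integrable_rpow_mul_exp_neg_mul_sq hb (s := n) (neg_one_lt_zero.trans_le n.cast_nonneg)
    simpa only [eval_monomial, mul_assoc] using integrable_pow.const_mul a

lemma integrable_eval_mul_iteratedDeriv_gaussian {b : ℝ} (hb : 0 < b) (q : ℝ[X]) (m : ℕ) :
    Integrable fun x => q.eval x * iteratedDeriv m (gaussian b) x := by
  obtain ⟨p, hp⟩ := exists_iteratedDeriv_gaussian_eq_eval_mul b m
  simpa only [hp, eval_mul, mul_assoc] using integrable_eval_mul_gaussian hb (q * p)

lemma integral_eval_mul_iteratedDeriv_succ_gaussian {b : ℝ} (hb : 0 < b) (q : ℝ[X]) (m : ℕ) :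
    ∫ x, q.eval x * iteratedDeriv (m + 1) (gaussian b) x
      = -∫ x, (derivative q).eval x * iteratedDeriv m (gaussian b) x :=
  integral_mul_deriv_eq_deriv_mul_of_integrable
    (fun x _ => q.hasDerivAt x) (fun x _ => hasDerivAt_iteratedDeriv_gaussian b m x)
    (integrable_eval_mul_iteratedDeriv_gaussian hb q (m + 1))
    (integrable_eval_mul_iteratedDeriv_gaussian hb (derivative q) m)
    (integrable_eval_mul_iteratedDeriv_gaussian hb q m)

lemma integral_eval_mul_iteratedDeriv_gaussian {b : ℝ} (hb : 0 < b) (q : ℝ[X]) (m : ℕ) :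
    ∫ x, q.eval x * iteratedDeriv m (gaussian b) x
      = (-1) ^ m * ∫ x, (derivative^[m] q).eval x * gaussian b x := by
  induction m generalizing q with
  | zero => simp
  | succ m ih =>
    rw [integral_eval_mul_iteratedDeriv_succ_gaussian hb, ih, Function.iterate_succ_apply]
    ring

/-- The absolute value of the constant in front of `exp(2πx²) (d^m/dx^m) exp(−2πx²)` in
`hermitePoly m`; the sign `(-1)^m` is left out because it cancels against the one coming from `m`
integrations by parts. -/
noncomputable def hermiteNorm (m : ℕ) : ℝ :=
  (2 : ℝ) ^ ((1 : ℝ) / 4 - m) * (m.factorial : ℝ) ^ (-(1 : ℝ) / 2) * π ^ (-(m : ℝ) / 2)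

lemma hermiteNorm_two_mul_hermiteNorm_zero : hermiteNorm 2 * hermiteNorm 0 = (4 * π)⁻¹ := by
  have powers_of_two :
      (2 : ℝ) ^ ((1 : ℝ) / 4 - 2) * 2 ^ (-(1 : ℝ) / 2) * 2 ^ ((1 : ℝ) / 4) = 4⁻¹ := by
    rw [← Real.rpow_add two_pos, ← Real.rpow_add two_pos,
      show (1 : ℝ) / 4 - 2 + -1 / 2 + 1 / 4 = (-2 : ℤ) by norm_num, Real.rpow_intCast]
    norm_num
  have power_of_pi : π ^ (-(2 : ℝ) / 2) = π⁻¹ := by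
    rw [neg_div_self two_ne_zero, Real.rpow_neg_one]
  calc hermiteNorm 2 * hermiteNorm 0
      = ((2 : ℝ) ^ ((1 : ℝ) / 4 - 2) * 2 ^ (-(1 : ℝ) / 2) * 2 ^ ((1 : ℝ) / 4))
          * π ^ (-(2 : ℝ) / 2) := by
        simp only [hermiteNorm, Nat.factorial_two, Nat.factorial_zero, Nat.cast_ofNat,
          Nat.cast_zero, Nat.cast_one, sub_zero, neg_zero, zero_div, Real.rpow_zero, Real.one_rpow,
          mul_one]
        ring
    _ = (4 * π)⁻¹ := by rw [powers_of_two, power_of_pi, mul_inv]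

lemma hermiteFun_eq_iteratedDeriv_gaussian (m : ℕ) (x : ℝ) :
    hermiteFun m x
      = (-1) ^ m * hermiteNorm m * (gaussian (-π) x * iteratedDeriv m (gaussian (2 * π)) x) := by
  have exp_mul_gaussian : Real.exp (2 * π * x ^ 2) * gaussian π x = gaussian (-π) x := by
    simp only [gaussian, ← Real.exp_add]
    ring_nf
  calc hermiteFun m x
      = (-1) ^ m * hermiteNorm m * ((Real.exp (2 * π * x ^ 2) * gaussian π x)
          * iteratedDeriv m (gaussian (2 * π)) x) := by
        unfold hermiteFun hermitePoly hermiteNorm gaussian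
        ring
    _ = _ := by rw [exp_mul_gaussian]

lemma hermiteFun_zero (x : ℝ) : hermiteFun 0 x = hermiteNorm 0 * gaussian π x := by
  rw [hermiteFun_eq_iteratedDeriv_gaussian, iteratedDeriv_zero, ← gaussian_add,
    show -π + 2 * π = π by ring, pow_zero, one_mul]

lemma deriv_hermiteFun_zero (x : ℝ) :
    deriv (hermiteFun 0) x = hermiteNorm 0 * (-(2 * π * x) * gaussian π x) := by
  rw [funext hermiteFun_zero, ((hasDerivAt_gaussian π x).const_mul _).deriv]

lemma deriv_hermiteFun_mul_gaussian (m : ℕ) (x : ℝ) :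
    deriv (hermiteFun m) x * gaussian π x
      = (-1) ^ m * hermiteNorm m * (2 * π * x * iteratedDeriv m (gaussian (2 * π)) x
          + iteratedDeriv (m + 1) (gaussian (2 * π)) x) := by
  have hasDerivAt_product := (hasDerivAt_gaussian (-π) x).fun_mul
    (hasDerivAt_iteratedDeriv_gaussian (2 * π) m x)
  rw [funext (hermiteFun_eq_iteratedDeriv_gaussian m), (hasDerivAt_product.const_mul _).deriv,
    gaussian_neg]
  field_simp [gaussian_ne_zero π x]

lemma integral_deriv_hermiteFun_mul_eval_mul_gaussian (m : ℕ) (q : ℝ[X]) :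
    ∫ x, deriv (hermiteFun m) x * (q.eval x * gaussian π x)
      = hermiteNorm m
          * ∫ x, (derivative^[m] (C (2 * π) * X * q - derivative q)).eval x
              * gaussian (2 * π) x := by
  have integrable_mul (p : ℝ[X]) (k : ℕ) :
      Integrable fun x => p.eval x * iteratedDeriv k (gaussian (2 * π)) x :=
    integrable_eval_mul_iteratedDeriv_gaussian two_pi_pos p k
  calc ∫ x, deriv (hermiteFun m) x * (q.eval x * gaussian π x)
      = ∫ x, (-1) ^ m * hermiteNorm m
          * ((C (2 * π) * X * q).eval x * iteratedDeriv m (gaussian (2 * π)) x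
            + q.eval x * iteratedDeriv (m + 1) (gaussian (2 * π)) x) := by
        refine integral_congr_ae (.of_forall fun x => ?_)
        simp only [eval_mul, eval_C, eval_X]
        linear_combination q.eval x * deriv_hermiteFun_mul_gaussian m x
    _ = (-1) ^ m * hermiteNorm m
          * ∫ x, (C (2 * π) * X * q - derivative q).eval x
              * iteratedDeriv m (gaussian (2 * π)) x := by
        rw [integral_const_mul, integral_add (integrable_mul _ _) (integrable_mul _ _),
          integral_eval_mul_iteratedDeriv_succ_gaussian two_pi_pos, ← sub_eq_add_neg,
          ← integral_sub (integrable_mul _ _) (integrable_mul _ _)]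
        simp only [eval_sub, sub_mul]
    _ = ((-1) ^ m * (-1) ^ m) * (hermiteNorm m
          * ∫ x, (derivative^[m] (C (2 * π) * X * q - derivative q)).eval x
              * gaussian (2 * π) x) := by
        rw [integral_eval_mul_iteratedDeriv_gaussian two_pi_pos]
        ring
    _ = _ := by rw [pow_mul_pow_eq_one m (by norm_num), one_mul]

lemma integral_deriv_hermiteFun_mul_deriv_hermiteFun_zero (m : ℕ) :
    ∫ x, deriv (hermiteFun m) x * deriv (hermiteFun 0) x
      = hermiteNorm m * hermiteNorm 0
          * ∫ x, (derivative^[m] (C (2 * π) - C (4 * π ^ 2) * X ^ 2)).eval x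
              * gaussian (2 * π) x := by
  have quadratic_eq : C (2 * π) * X * (C (-(2 * π)) * X) - derivative (C (-(2 * π)) * X)
      = C (2 * π) - C (4 * π ^ 2) * X ^ 2 := by
    rw [derivative_C_mul_X]
    simp only [C_neg, C_mul, C_pow, C_ofNat]
    ring
  calc ∫ x, deriv (hermiteFun m) x * deriv (hermiteFun 0) x
      = ∫ x, hermiteNorm 0
          * (deriv (hermiteFun m) x * ((C (-(2 * π)) * X).eval x * gaussian π x)) := by
        simp only [deriv_hermiteFun_zero, eval_mul, eval_C, eval_X, neg_mul, mul_left_comm]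
    _ = _ := by
        rw [integral_const_mul, integral_deriv_hermiteFun_mul_eval_mul_gaussian, quadratic_eq]
        ring

/-- For `m ≥ 1`: `∫ 𝓗′_m 𝓗′_0 = −π√2·δ_{m,2}`. -/
theorem integral_deriv_hermiteFun_mul_zero (m : ℕ) (hm : 1 ≤ m) :
    ∫ x : ℝ, deriv (hermiteFun m) x * deriv (hermiteFun 0) x
      = -(Real.pi * Real.sqrt 2) * (if m = 2 then (1 : ℝ) else 0) := by
  rw [integral_deriv_hermiteFun_mul_deriv_hermiteFun_zero]
  obtain rfl | rfl | three_le : m = 1 ∨ m = 2 ∨ 3 ≤ m := by lia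
  · simp only [Function.iterate_one, derivative_C_sub_C_mul_X_sq, eval_mul, eval_C, eval_X,
      mul_assoc, integral_const_mul, integral_mul_gaussian_eq_zero, mul_zero, OfNat.one_ne_ofNat,
      if_false]
  · rw [hermiteNorm_two_mul_hermiteNorm_zero, Function.iterate_succ_apply, Function.iterate_one,
      derivative_C_sub_C_mul_X_sq, derivative_C_mul_X, if_pos rfl]
    simp only [eval_C, integral_const_mul, integral_gaussian_two_pi]
    field_simp
  · have iterate_derivative_quadratic :
        derivative^[m] (C (2 * π) - C (4 * π ^ 2) * X ^ 2) = 0 :=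
      iterate_derivative_eq_zero (lt_of_le_of_lt (by compute_degree) three_le)
    rw [iterate_derivative_quadratic, if_neg (by lia)]
    simp only [eval_zero, zero_mul, integral_zero, mul_zero]
end
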